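/- For any C₀ > 4 and c₁ ∈ (0, 2) there exists C₂ > 0 such that the following holds for every sequence (ε_n) of positive reals satisfying 2 − c₁ ≥ ε_n ≥ C₂/√(log n) for all sufficiently large n. For each n, let d = ⌈(2 − ε_n) n ln n⌉, m = ⌊n / ln n⌋, and let (X, y) be an isotropic Gaussian sample of size n in dimension d with rows x₁,…,xₙ. Then lim_{n→∞} P[ max_{i ∈ [m]} (1/d) y_i y_{∖[m]}ᵀ X_{∖[m]} x_i ≥ 1 + ε_n / C₀ ] = 1, where X_{∖[m]} ∈ ℝ^{(n−m)×d} and y_{∖[m]} ∈ ℝ^{n−m} consist of the last n − m rows/entries of X and y. -/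

import Mathlib

open MeasureTheory ProbabilityTheory Matrix Filter

noncomputable section

/-- `X` has i.i.d. standard Gaussian entries (equivalently, its rows are i.i.d. `N(0, I_d)`). -/
structure IsGaussSample {Ω : Type*} [MeasurableSpace Ω] (μ : Measure Ω)
    {n d : ℕ} (X : Ω → Matrix (Fin n) (Fin d) ℝ) : Prop where
  meas : ∀ i j, Measurable fun ω => X ω i j
  indep : iIndepFun (fun (p : Fin n × Fin d) ω => X ω p.1 p.2) μ
  law : ∀ i j, Measure.map (fun ω => X ω i j) μ = gaussianReal 0 1

/-
Condition on the rows outside `[m]`, that is, on `w = y_{∖[m]}ᵀ X_{∖[m]}`. Its entries are i.i.d.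
`N(0, n - m)`, so `‖w‖² ≥ (1 - 1 / log n) d (n - m)` up to a vanishing probability by Chebyshev, and
given `w` the `m` scores `yᵢ ⟨w, xᵢ⟩` are i.i.d. `N(0, ‖w‖²)`. Instead of the Gumbel limit law, the
lower bound `P(N ≥ t) ≥ φ(t + 1)` suffices: all scores stay below `d (1 + ε / C₀)` with probability
at most `exp (-m φ(t + 1))`, where `t² = (2 - κ ε) log n + 16`. The condition `C₀ > 4` makes
`κ = 1 - 4 / C₀` positive, and then `(1 + ε / C₀)² (2 - ε) ≤ 2 - κ ε`. Since `κ ε log n` is at least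
a large multiple of `√(log n)`, we get `m φ(t + 1) → ∞`.
-/

open scoped ENNReal NNReal

section Independence

variable {Ω ι : Type*} {mΩ : MeasurableSpace Ω} {μ : Measure Ω}

lemma iIndepFun_curry {κ : ι → Type*} {𝓧 : (i : ι) → κ i → Type*}
    [∀ i j, MeasurableSpace (𝓧 i j)] {X : (i : ι) → (j : κ i) → Ω → 𝓧 i j}
    (mX : ∀ i j, Measurable (X i j))
    (h : iIndepFun (fun (p : (i : ι) × κ i) ω => X p.1 p.2 ω) μ) :
    iIndepFun (fun i ω j => X i j ω) μ := by
  have := h.isProbabilityMeasure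
  have : ∀ i j, IsProbabilityMeasure (μ.map (X i j)) :=
    fun i j => Measure.isProbabilityMeasure_map (mX i j).aemeasurable
  have hcurry : MeasurableEquiv.piCurry 𝓧 ∘ (fun ω p => X p.1 p.2 ω) = fun ω i j => X i j ω := by
    ext; simp [Sigma.curry]
  have hrow (i : ι) : μ.map (fun ω j => X i j ω) = Measure.infinitePi fun j => μ.map (X i j) :=
    (iIndepFun_iff_map_fun_eq_infinitePi_map (mX i)).1
      (h.precomp (g := fun j => (⟨i, j⟩ : (i : ι) × κ i)) sigma_mk_injective)
  rw [iIndepFun_iff_map_fun_eq_infinitePi_map (by fun_prop), ← hcurry,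
    ← Measure.map_map (by fun_prop) (by fun_prop),
    (iIndepFun_iff_map_fun_eq_infinitePi_map (by fun_prop)).1 h,
    Measure.infinitePi_map_piCurry fun i j => μ.map (X i j)]
  simp only [hrow]

lemma measure_prodMk_mem_le_of_indepFun {α β : Type*} [MeasurableSpace α] [MeasurableSpace β]
    {W : Ω → α} {Z : Ω → β} [IsProbabilityMeasure μ] (hWZ : IndepFun W Z μ) (hW : Measurable W)
    (hZ : Measurable Z) {E : Set (α × β)} (hE : MeasurableSet E) {G : Set α}
    (hG : MeasurableSet G) {b : ℝ≥0∞} (hb : ∀ w ∉ G, μ {ω | (w, Z ω) ∈ E} ≤ b) :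
    μ {ω | (W ω, Z ω) ∈ E} ≤ μ {ω | W ω ∈ G} + b := by
  have := Measure.isProbabilityMeasure_map (μ := μ) hW.aemeasurable
  have := Measure.isProbabilityMeasure_map (μ := μ) hZ.aemeasurable
  have hsection (w : α) : μ.map Z (Prod.mk w ⁻¹' E) ≤ G.indicator 1 w + b := by
    by_cases hw : w ∈ G
    · simpa [hw] using prob_le_one.trans le_self_add
    · rw [Measure.map_apply hZ (measurable_prodMk_left hE)]
      exact (hb w hw).trans le_add_self
  calc μ {ω | (W ω, Z ω) ∈ E} = (μ.map W).prod (μ.map Z) E := by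
        rw [← hWZ.map_prod_eq_prod_map_map hW.aemeasurable hZ.aemeasurable,
          Measure.map_apply (hW.prodMk hZ) hE]
        rfl
    _ = ∫⁻ w, μ.map Z (Prod.mk w ⁻¹' E) ∂μ.map W := Measure.prod_apply hE
    _ ≤ ∫⁻ w, G.indicator 1 w + b ∂μ.map W := lintegral_mono hsection
    _ = μ {ω | W ω ∈ G} + b := by
        rw [lintegral_add_right _ measurable_const, lintegral_indicator_one hG,
          Measure.map_apply hW hG, lintegral_const, measure_univ, mul_one]
        rfl

end Independence

lemma measurable_dotProduct {α ι : Type*} [MeasurableSpace α] [Fintype ι] {f g : α → ι → ℝ}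
    (hf : Measurable f) (hg : Measurable g) : Measurable fun x => f x ⬝ᵥ g x := by
  simp only [dotProduct]
  fun_prop

section Gaussian

variable {Ω ι : Type*} {mΩ : MeasurableSpace Ω} {μ : Measure Ω} [Fintype ι] {f : ι → Ω → ℝ}

lemma hasLaw_sum_gaussianReal {m : ι → ℝ} {v : ι → ℝ≥0} (hf : iIndepFun f μ)
    (hlaw : ∀ i, HasLaw (f i) (gaussianReal (m i) (v i)) μ) :
    HasLaw (fun ω => ∑ i, f i ω) (gaussianReal (∑ i, m i) (∑ i, v i)) μ := by
  have := hf.isProbabilityMeasure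
  have hmeas : ∀ i, AEMeasurable (f i) μ := fun i => (hlaw i).aemeasurable
  have hsum : AEMeasurable (fun ω => ∑ i, f i ω) μ := by fun_prop
  have := Measure.isProbabilityMeasure_map (μ := μ) hsum
  refine ⟨hsum, Measure.ext_of_charFun ?_⟩
  rw [hf.charFun_map_fun_sum_eq_prod hmeas]
  ext t
  simp only [Finset.prod_apply, (hlaw _).map_eq, charFun_gaussianReal, ← Complex.exp_sum,
    Finset.sum_sub_distrib, Complex.ofReal_sum, NNReal.coe_sum, Finset.sum_mul, Finset.mul_sum,
    Finset.sum_div]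

lemma hasLaw_dotProduct_gaussianReal {v : ℝ≥0} (hf : iIndepFun f μ)
    (hlaw : ∀ i, HasLaw (f i) (gaussianReal 0 v) μ) (w : ι → ℝ) :
    HasLaw (fun ω => w ⬝ᵥ fun i => f i ω) (gaussianReal 0 ((w ⬝ᵥ w).toNNReal * v)) μ := by
  have h := hasLaw_sum_gaussianReal (hf.comp (fun i x => w i * x) (fun i => by fun_prop))
    (fun i => gaussianReal_const_mul (hlaw i) (w i))
  have hvar : ∑ i, NNReal.mk (w i ^ 2) (sq_nonneg (w i)) = (w ⬝ᵥ w).toNNReal := by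
    ext
    rw [Real.coe_toNNReal _ (by simpa using dotProduct_star_self_nonneg w)]
    simp [dotProduct, sq]
  simp only [mul_zero, Finset.sum_const_zero, ← Finset.sum_mul, hvar] at h
  exact h

lemma gaussianReal_Iio_le {v : ℝ≥0} {T t : ℝ} (hT : T ≤ √v * t) :
    gaussianReal 0 v (Set.Iio T) ≤ gaussianReal 0 1 (Set.Iio t) := by
  have hmap : gaussianReal 0 v = (gaussianReal 0 1).map (√v * ·) := by
    rw [gaussianReal_map_const_mul]
    congr 1
    · simp
    · ext; simp
  rw [hmap, Measure.map_apply (by fun_prop) measurableSet_Iio]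
  exact measure_mono fun x hx =>
    lt_of_mul_lt_mul_left (lt_of_lt_of_le hx hT) (Real.sqrt_nonneg _)

lemma antitoneOn_gaussianPDFReal (m : ℝ) (v : ℝ≥0) :
    AntitoneOn (gaussianPDFReal m v) (Set.Ici m) := by
  intro x hx y _ hxy
  have : 0 ≤ x - m := sub_nonneg.2 hx
  simp only [gaussianPDFReal]
  gcongr

lemma gaussianPDF_le_gaussianReal_Ici {m t : ℝ} {v : ℝ≥0} (hv : v ≠ 0) (hmt : m ≤ t) :
    gaussianPDF m v (t + 1) ≤ gaussianReal m v (Set.Ici t) := by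
  calc gaussianPDF m v (t + 1) = ∫⁻ _ in Set.Icc t (t + 1), gaussianPDF m v (t + 1) := by simp
    _ ≤ ∫⁻ x in Set.Icc t (t + 1), gaussianPDF m v x :=
        setLIntegral_mono' measurableSet_Icc fun x hx => ENNReal.ofReal_le_ofReal <|
          antitoneOn_gaussianPDFReal m v (hmt.trans hx.1) (hmt.trans (hx.1.trans hx.2)) hx.2
    _ ≤ ∫⁻ x in Set.Ici t, gaussianPDF m v x := lintegral_mono_set Set.Icc_subset_Ici_self
    _ = gaussianReal m v (Set.Ici t) := (gaussianReal_apply m hv _).symm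

lemma gaussianReal_Iio_pow_le {m t : ℝ} {v : ℝ≥0} (hv : v ≠ 0) (hmt : m ≤ t) (k : ℕ) :
    gaussianReal m v (Set.Iio t) ^ k ≤
      ENNReal.ofReal (Real.exp (-(k * gaussianPDFReal m v (t + 1)))) := by
  set q := gaussianPDFReal m v (t + 1)
  have hIio : gaussianReal m v (Set.Iio t) ≤ ENNReal.ofReal (Real.exp (-q)) := by
    calc gaussianReal m v (Set.Iio t) = 1 - gaussianReal m v (Set.Ici t) := by
          rw [← Set.compl_Ici, prob_compl_eq_one_sub measurableSet_Ici]
      _ ≤ 1 - ENNReal.ofReal q := tsub_le_tsub_left (gaussianPDF_le_gaussianReal_Ici hv hmt) 1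
      _ = ENNReal.ofReal (1 - q) := by
          rw [ENNReal.ofReal_sub _ (gaussianPDFReal_nonneg _ _ _), ENNReal.ofReal_one]
      _ ≤ ENNReal.ofReal (Real.exp (-q)) :=
          ENNReal.ofReal_le_ofReal (Real.one_sub_le_exp_neg q)
  calc gaussianReal m v (Set.Iio t) ^ k ≤ ENNReal.ofReal (Real.exp (-q)) ^ k := by gcongr
    _ = ENNReal.ofReal (Real.exp (-(k * q))) := by
        rw [← ENNReal.ofReal_pow (Real.exp_pos _).le, ← Real.exp_nat_mul, mul_neg]

end Gaussian

section SumSq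

lemma deriv_eval_mul_exp (v : ℝ) (p : Polynomial ℝ) :
    deriv (fun t => p.eval t * Real.exp (v * t ^ 2 / 2)) = fun t =>
      (p.derivative + Polynomial.C v * Polynomial.X * p).eval t * Real.exp (v * t ^ 2 / 2) := by
  ext t
  have hexp : HasDerivAt (fun t => Real.exp (v * t ^ 2 / 2))
      (Real.exp (v * t ^ 2 / 2) * (v * t)) t := by
    convert (((hasDerivAt_pow 2 t).const_mul v).div_const 2).exp using 1
    push_cast; ring
  rw [((p.hasDerivAt t).fun_mul hexp).deriv]
  simp only [Polynomial.eval_add, Polynomial.eval_mul, Polynomial.eval_C, Polynomial.eval_X]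
  ring

lemma integral_pow_four_gaussianReal (v : ℝ≥0) :
    ∫ x, x ^ 4 ∂gaussianReal 0 v = 3 * (v : ℝ) ^ 2 := by
  calc ∫ x, x ^ 4 ∂gaussianReal 0 v
      = iteratedDeriv 4 (mgf (fun x => x) (gaussianReal 0 v)) 0 := by
        rw [iteratedDeriv_mgf_zero] <;> simp
    _ = iteratedDeriv 4
          (fun t => (1 : Polynomial ℝ).eval t * Real.exp (v * t ^ 2 / 2)) 0 := by
        rw [mgf_fun_id_gaussianReal]; simp
    _ = 3 * (v : ℝ) ^ 2 := by
        simp only [iteratedDeriv_succ', deriv_eval_mul_exp, iteratedDeriv_zero]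
        simp only [Polynomial.derivative_one, Polynomial.derivative_mul, Polynomial.derivative_C,
          Polynomial.derivative_X, Polynomial.derivative_add, Polynomial.eval_add,
          Polynomial.eval_mul, Polynomial.eval_C, Polynomial.eval_X, mul_one, zero_add, zero_mul,
          mul_zero, add_zero, ne_eq, OfNat.ofNat_ne_zero, not_false_eq_true, zero_pow, zero_div,
          Real.exp_zero]
        ring

lemma integral_sq_gaussianReal (v : ℝ≥0) : ∫ x, x ^ 2 ∂gaussianReal 0 v = v := by
  rw [← variance_fun_id_gaussianReal (μ := 0) (v := v),
    variance_of_integral_eq_zero (by fun_prop) integral_id_gaussianReal]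

lemma memLp_sq_gaussianReal (m : ℝ) (v : ℝ≥0) :
    MemLp (fun x : ℝ => x ^ 2) 2 (gaussianReal m v) := by
  refine (memLp_two_iff_integrable_sq (by fun_prop)).2 ?_
  have h := (memLp_id_gaussianReal' (μ := m) (v := v) 4 (by simp)).integrable_norm_pow (by simp)
  convert h using 2 with x
  simp [← pow_mul, (by decide : Even 4).pow_abs]

lemma variance_sq_gaussianReal (v : ℝ≥0) :
    Var[fun x => x ^ 2; gaussianReal 0 v] = 2 * (v : ℝ) ^ 2 := by
  rw [variance_eq_sub (memLp_sq_gaussianReal 0 v), integral_sq_gaussianReal]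
  simp only [Pi.pow_apply, ← pow_mul, Nat.reduceMul, integral_pow_four_gaussianReal]
  ring

variable {Ω κ : Type*} {mΩ : MeasurableSpace Ω} {μ : Measure Ω} [Fintype κ] {f : κ → Ω → ℝ}
    {v : ℝ≥0}

lemma measure_sum_sq_lt_le (hf : iIndepFun f μ) (hlaw : ∀ k, HasLaw (f k) (gaussianReal 0 v) μ)
    {δ : ℝ} (hδ : 0 < δ) :
    μ {ω | ∑ k, f k ω ^ 2 < (1 - δ) * (Fintype.card κ * v)} ≤
      ENNReal.ofReal (2 / (Fintype.card κ * δ ^ 2)) := by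
  have := hf.isProbabilityMeasure
  set N : ℝ := (Fintype.card κ : ℝ) with hN
  rcases (by positivity : 0 ≤ N * v).eq_or_lt with h0 | hpos
  · have : {ω | ∑ k, f k ω ^ 2 < (1 - δ) * (N * v)} = ∅ := by
      ext ω
      simpa [← h0] using Finset.sum_nonneg fun k _ => sq_nonneg (f k ω)
    simp [this]
  have hident (k : κ) : IdentDistrib (fun ω => f k ω ^ 2) (fun x => x ^ 2) μ (gaussianReal 0 v) :=
    ((hlaw k).identDistrib (HasLaw.id)).sq
  have hLp (k : κ) : MemLp (fun ω => f k ω ^ 2) 2 μ :=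
    (hident k).memLp_iff.2 (memLp_sq_gaussianReal 0 v)
  have hindep := hf.comp (fun _ x => x ^ 2) (fun _ => by fun_prop)
  have hmean : μ[∑ k, fun ω => f k ω ^ 2] = N * v := by
    simp only [Finset.sum_apply]
    rw [integral_finsetSum _ fun k _ => (hLp k).integrable (by norm_num)]
    simp [(hident _).integral_eq, integral_sq_gaussianReal, hN]
  have hvar : Var[∑ k, fun ω => f k ω ^ 2; μ] = N * (2 * (v : ℝ) ^ 2) := by
    rw [IndepFun.variance_sum (fun k _ => hLp k) fun i _ j _ hij => hindep.indepFun hij]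
    simp [(hident _).variance_eq, variance_sq_gaussianReal, hN]
  have hcheb := meas_ge_le_variance_div_sq (memLp_finsetSum' Finset.univ fun k _ => hLp k)
    (c := δ * (N * v)) (by positivity)
  rw [hmean, hvar] at hcheb
  calc μ {ω | ∑ k, f k ω ^ 2 < (1 - δ) * (N * v)}
      ≤ μ {ω | δ * (N * v) ≤ |(∑ k, fun ω => f k ω ^ 2) ω - N * v|} := by
        refine measure_mono fun ω hω => ?_
        simp only [Set.mem_ofPred_eq, Finset.sum_apply] at hω ⊢
        refine le_abs.2 (Or.inr ?_)
        linarith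
    _ ≤ ENNReal.ofReal (N * (2 * (v : ℝ) ^ 2) / (δ * (N * v)) ^ 2) := hcheb
    _ = ENNReal.ofReal (2 / (N * δ ^ 2)) := by
        have hN0 : N ≠ 0 := left_ne_zero_of_mul hpos.ne'
        have hv0 : (v : ℝ) ≠ 0 := right_ne_zero_of_mul hpos.ne'
        congr 1
        field_simp

end SumSq

namespace IsGaussSample

variable {Ω : Type*} [MeasurableSpace Ω] {μ : Measure Ω} {n d : ℕ}
  {X : Ω → Matrix (Fin n) (Fin d) ℝ}

lemma iIndepFun_rows (hX : IsGaussSample μ X) : iIndepFun (fun i ω => X ω i) μ :=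
  iIndepFun_curry hX.meas (hX.indep.precomp (Equiv.sigmaEquivProd (Fin n) (Fin d)).injective)

lemma iIndepFun_cols (hX : IsGaussSample μ X) : iIndepFun (fun k ω i => X ω i k) μ :=
  iIndepFun_curry (fun k i => hX.meas i k)
    (hX.indep.precomp ((Equiv.sigmaEquivProd (Fin d) (Fin n)).trans (Equiv.prodComm _ _)).injective)

lemma measurable_row (hX : IsGaussSample μ X) (i : Fin n) : Measurable fun ω => X ω i :=
  measurable_pi_lambda _ (hX.meas i)

lemma measurable_vecMul (hX : IsGaussSample μ X) (u : Fin n → ℝ) :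
    Measurable fun ω => u ᵥ* X ω :=
  measurable_pi_lambda _ fun k =>
    measurable_dotProduct measurable_const (measurable_pi_lambda _ fun i => hX.meas i k)

lemma hasLaw_entry (hX : IsGaussSample μ X) (i : Fin n) (k : Fin d) :
    HasLaw (fun ω => X ω i k) (gaussianReal 0 1) μ :=
  ⟨(hX.meas i k).aemeasurable, hX.law i k⟩

lemma hasLaw_dotProduct_row (hX : IsGaussSample μ X) (w : Fin d → ℝ) (i : Fin n) :
    HasLaw (fun ω => w ⬝ᵥ X ω i) (gaussianReal 0 (w ⬝ᵥ w).toNNReal) μ := by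
  simpa only [mul_one] using hasLaw_dotProduct_gaussianReal
    (hX.indep.precomp (Prod.mk_right_injective i)) (hX.hasLaw_entry i) w

lemma hasLaw_vecMul (hX : IsGaussSample μ X) (u : Fin n → ℝ) (k : Fin d) :
    HasLaw (fun ω => (u ᵥ* X ω) k) (gaussianReal 0 (u ⬝ᵥ u).toNNReal) μ := by
  have h := hasLaw_dotProduct_gaussianReal
    (hX.indep.precomp (Prod.mk_left_injective k)) (fun i => hX.hasLaw_entry i k) u
  rwa [mul_one] at h

lemma iIndepFun_vecMul (hX : IsGaussSample μ X) (u : Fin n → ℝ) :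
    iIndepFun (fun k ω => (u ᵥ* X ω) k) μ :=
  hX.iIndepFun_cols.comp (fun _ x => u ⬝ᵥ x) fun _ =>
    measurable_dotProduct measurable_const measurable_id

lemma indepFun_vecMul_rows (hX : IsGaussSample μ X) {u : Fin n → ℝ} {S : Finset (Fin n)}
    (hu : ∀ i ∈ S, u i = 0) : IndepFun (fun ω => u ᵥ* X ω) (fun ω (i : S) => X ω i) μ := by
  have h := hX.iIndepFun_rows.indepFun_finset Sᶜ S disjoint_compl_left hX.measurable_row
  have hsum : Measurable fun (x : (Sᶜ : Finset (Fin n)) → Fin d → ℝ) k =>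
      ∑ i : (Sᶜ : Finset (Fin n)), u i * x i k := by fun_prop
  have hvecMul : (fun ω => u ᵥ* X ω) = (fun x k => ∑ i : (Sᶜ : Finset (Fin n)), u i * x i k) ∘
      fun ω i => X ω i := by
    ext ω k
    have hcompl : ∑ i ∈ Sᶜ, u i * X ω i k = ∑ i, u i * X ω i k :=
      Finset.sum_subset (Finset.subset_univ _) fun i _ hi => by simp [hu i (by simpa using hi)]
    exact hcompl.symm.trans (Finset.sum_coe_sort _ _).symm
  rw [hvecMul]
  exact h.comp hsum measurable_id

lemma measure_vecMul_dotProduct_self_lt_le (hX : IsGaussSample μ X) (u : Fin n → ℝ) {δ : ℝ}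
    (hδ : 0 < δ) :
    μ {ω | (u ᵥ* X ω) ⬝ᵥ (u ᵥ* X ω) < (1 - δ) * (d * (u ⬝ᵥ u))} ≤
      ENNReal.ofReal (2 / (d * δ ^ 2)) := by
  have h := measure_sum_sq_lt_le (hX.iIndepFun_vecMul u) (hX.hasLaw_vecMul u) hδ
  rw [Fintype.card_fin, Real.coe_toNNReal _ (by simpa using dotProduct_star_self_nonneg u)] at h
  simpa only [dotProduct, ← sq] using h

lemma measure_forall_dotProduct_row_lt_le (hX : IsGaussSample μ X) {w : Fin d → ℝ} {a : Fin n → ℝ}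
    {S : Finset (Fin n)} (ha : ∀ i ∈ S, |a i| = 1) {T t : ℝ} (hT : T ≤ √(w ⬝ᵥ w) * t) :
    μ {ω | ∀ i ∈ S, a i * (w ⬝ᵥ X ω i) < T} ≤ gaussianReal 0 1 (Set.Iio t) ^ S.card := by
  have hrow (i : Fin n) (hi : i ∈ S) :
      μ {ω | a i * (w ⬝ᵥ X ω i) < T} ≤ gaussianReal 0 1 (Set.Iio t) := by
    have hself : (a i • w) ⬝ᵥ (a i • w) = w ⬝ᵥ w := by
      rw [smul_dotProduct, dotProduct_smul, smul_smul, ← abs_mul_abs_self, ha i hi]; simp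
    have hlaw := hX.hasLaw_dotProduct_row (a i • w) i
    simp only [smul_dotProduct (a i) w (X _ i), smul_eq_mul, hself] at hlaw
    rw [hlaw.measure_eq measurableSet_Iio]
    refine gaussianReal_Iio_le ?_
    rwa [Real.coe_toNNReal _ (by simpa using dotProduct_star_self_nonneg w)]
  have hindep : iIndepFun (fun i ω => a i * (w ⬝ᵥ X ω i)) μ :=
    hX.iIndepFun_rows.comp (fun i x => a i * (w ⬝ᵥ x)) fun i =>
      (measurable_dotProduct measurable_const measurable_id).const_mul (a i)
  calc μ {ω | ∀ i ∈ S, a i * (w ⬝ᵥ X ω i) < T}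
      = μ (⋂ i ∈ S, (fun ω => a i * (w ⬝ᵥ X ω i)) ⁻¹' Set.Iio T) := by
        congr 1; ext ω; simp
    _ = ∏ i ∈ S, μ {ω | a i * (w ⬝ᵥ X ω i) < T} :=
        hindep.measure_inter_preimage_eq_mul S fun _ _ => measurableSet_Iio
    _ ≤ gaussianReal 0 1 (Set.Iio t) ^ S.card := Finset.prod_le_pow_card _ _ _ hrow

lemma measure_forall_vecMul_dotProduct_row_lt_le (hX : IsGaussSample μ X) {u a : Fin n → ℝ}
    {S : Finset (Fin n)} (hu : ∀ i ∈ S, u i = 0) (ha : ∀ i ∈ S, |a i| = 1) {r T t : ℝ}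
    (ht : 0 ≤ t) (hT : T ≤ √r * t) :
    μ {ω | ∀ i ∈ S, a i * ((u ᵥ* X ω) ⬝ᵥ X ω i) < T} ≤
      μ {ω | (u ᵥ* X ω) ⬝ᵥ (u ᵥ* X ω) < r} + gaussianReal 0 1 (Set.Iio t) ^ S.card := by
  have := hX.indep.isProbabilityMeasure
  let E : Set ((Fin d → ℝ) × (S → Fin d → ℝ)) := {p | ∀ i : S, a i * (p.1 ⬝ᵥ p.2 i) < T}
  let G : Set (Fin d → ℝ) := {w | w ⬝ᵥ w < r}
  have hE : MeasurableSet E := by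
    simp only [E, Set.ofPred_forall]
    exact MeasurableSet.iInter fun i => measurableSet_lt
      ((measurable_dotProduct (by fun_prop) (by fun_prop)).const_mul (a i)) measurable_const
  have hG : MeasurableSet G :=
    measurableSet_lt (measurable_dotProduct measurable_id measurable_id) measurable_const
  have hfixed : ∀ w ∉ G, μ {ω | (w, fun i : S => X ω i) ∈ E} ≤
      gaussianReal 0 1 (Set.Iio t) ^ S.card := by
    intro w hw
    have hle : T ≤ √(w ⬝ᵥ w) * t :=
      hT.trans (mul_le_mul_of_nonneg_right (Real.sqrt_le_sqrt (not_lt.1 hw)) ht)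
    simpa [E] using hX.measure_forall_dotProduct_row_lt_le ha hle
  simpa [E, G] using measure_prodMk_mem_le_of_indepFun (hX.indepFun_vecMul_rows hu)
    (hX.measurable_vecMul u) (measurable_pi_lambda _ fun i => hX.measurable_row i) hE hG hfixed

lemma one_sub_le_measure_exists_le (hX : IsGaussSample μ X) {u a : Fin n → ℝ}
    {S : Finset (Fin n)} (hu : ∀ i ∈ S, u i = 0) (ha : ∀ i ∈ S, |a i| = 1) {δ T t : ℝ}
    (hδ : 0 < δ) (ht : 0 ≤ t) (hT : T ≤ √((1 - δ) * (d * (u ⬝ᵥ u))) * t) :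
    1 - (ENNReal.ofReal (2 / (d * δ ^ 2)) +
        ENNReal.ofReal (Real.exp (-(S.card * gaussianPDFReal 0 1 (t + 1))))) ≤
      μ {ω | ∃ i ∈ S, T ≤ a i * ((u ᵥ* X ω) ⬝ᵥ X ω i)} := by
  have := hX.indep.isProbabilityMeasure
  have hfail : μ {ω | ∀ i ∈ S, a i * ((u ᵥ* X ω) ⬝ᵥ X ω i) < T} ≤
      ENNReal.ofReal (2 / (d * δ ^ 2)) +
        ENNReal.ofReal (Real.exp (-(S.card * gaussianPDFReal 0 1 (t + 1)))) :=
    (hX.measure_forall_vecMul_dotProduct_row_lt_le hu ha ht hT).trans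
      (add_le_add (hX.measure_vecMul_dotProduct_self_lt_le u hδ)
        (gaussianReal_Iio_pow_le one_ne_zero ht _))
  have hcompl : {ω | ∃ i ∈ S, T ≤ a i * ((u ᵥ* X ω) ⬝ᵥ X ω i)}ᶜ =
      {ω | ∀ i ∈ S, a i * ((u ᵥ* X ω) ⬝ᵥ X ω i) < T} := by
    ext ω; simp
  rw [tsub_le_iff_left]
  calc (1 : ℝ≥0∞) = μ Set.univ := measure_univ.symm
    _ ≤ _ := by
      rw [← Set.compl_union_self]
      refine (measure_union_le _ _).trans (add_le_add_left (hcompl ▸ hfail) _)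

end IsGaussSample

lemma one_add_div_sq_mul_two_sub_le {C ε : ℝ} (hC : 1 ≤ C) (hε : 0 ≤ ε) :
    (1 + ε / C) ^ 2 * (2 - ε) ≤ 2 - (1 - 4 / C) * ε := by
  have : 0 < C := one_pos.trans_le hC
  have hdiff : 2 - (1 - 4 / C) * ε - (1 + ε / C) ^ 2 * (2 - ε) =
      2 * (C - 1) * (ε / C) ^ 2 + C * (ε / C) ^ 3 := by
    field_simp
    ring
  have h1 : 0 ≤ 2 * (C - 1) * (ε / C) ^ 2 := mul_nonneg (by linarith) (sq_nonneg _)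
  have h2 : 0 ≤ C * (ε / C) ^ 3 := by positivity
  linarith

/-- The level `t` with `t² = (2 - κ ε) L + 16`, where `L = log n`, at which the tail of a normalized
score is evaluated. The slack `16` absorbs the rounding of `d`, the loss of `m` rows, and the
relative fluctuation `1 / L` of the norm. -/
def tailLevel (κ ε L : ℝ) : ℝ := √((2 - κ * ε) * L + 16)

lemma mul_one_add_div_sq_le {C ε n L d : ℝ} (hC : 4 ≤ C) (hε : 0 ≤ ε) (hε2 : ε ≤ 2) (hn : 4 ≤ n)
    (hL : 0 ≤ L) (hd : d ≤ (2 - ε) * n * L + 1) :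
    d * (1 + ε / C) ^ 2 ≤ n * ((2 - (1 - 4 / C) * ε) * L + 1) := by
  have hdiv : ε / C ≤ 1 := by rw [div_le_one (by linarith)]; linarith
  have hsq : (1 + ε / C) ^ 2 ≤ n := by
    have : 0 ≤ ε / C := by positivity
    nlinarith
  calc d * (1 + ε / C) ^ 2 ≤ ((2 - ε) * n * L + 1) * (1 + ε / C) ^ 2 := by gcongr
    _ = (1 + ε / C) ^ 2 * (2 - ε) * (n * L) + (1 + ε / C) ^ 2 := by ring
    _ ≤ (2 - (1 - 4 / C) * ε) * (n * L) + n := by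
        gcongr
        exact one_add_div_sq_mul_two_sub_le (by linarith) hε
    _ = n * ((2 - (1 - 4 / C) * ε) * L + 1) := by ring

lemma mul_add_one_le_mul_one_sub_inv_sq {A L : ℝ} (hA0 : 0 ≤ A) (hA : A ≤ 2) (hL : 4 ≤ L) :
    A * L + 1 ≤ (A * L + 16) * (1 - 1 / L) ^ 2 := by
  have : 0 < L := by linarith
  have hinv : 1 / L ≤ 1 / 4 := one_div_le_one_div_of_le (by norm_num) hL
  have hexpand : (A * L + 16) * (1 - 1 / L) ^ 2 =
      A * L + 16 - 2 * A - 32 * (1 / L) + (A * L + 16) * (1 / L) ^ 2 := by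
    field_simp
    ring
  have hrest : 0 ≤ (A * L + 16) * (1 / L) ^ 2 := by positivity
  linarith

lemma mul_one_add_div_le_sqrt_mul_tailLevel {C ε n L d m : ℝ} (hC : 4 ≤ C) (hε : 0 ≤ ε)
    (hε2 : ε ≤ 2) (hn : 4 ≤ n) (hL : 4 ≤ L) (hd0 : 0 ≤ d) (hd : d ≤ (2 - ε) * n * L + 1)
    (hm : m ≤ n / L) :
    d * (1 + ε / C) ≤ √((1 - 1 / L) * (d * (n - m))) * tailLevel (1 - 4 / C) ε L := by
  set A := 2 - (1 - 4 / C) * ε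
  have hκ1 : 0 ≤ 4 / C := by positivity
  have hκ0 : 4 / C ≤ 1 := (div_le_one (by linarith)).2 hC
  have hA0 : 0 ≤ A := by nlinarith
  have hA2 : A ≤ 2 := by nlinarith
  have hL1 : 0 ≤ 1 - 1 / L := sub_nonneg.2 ((div_le_one (by linarith)).2 (by linarith))
  have hAL : 0 ≤ A * L + 16 := by positivity
  have hrows : n * (1 - 1 / L) ≤ n - m := by
    rw [mul_one_sub, mul_one_div]; linarith
  rw [tailLevel, ← Real.sqrt_mul' _ hAL]
  apply Real.le_sqrt_of_sq_le
  calc (d * (1 + ε / C)) ^ 2 = d * (d * (1 + ε / C) ^ 2) := by ring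
    _ ≤ d * (n * (A * L + 1)) := mul_le_mul_of_nonneg_left
        (mul_one_add_div_sq_le hC hε hε2 hn (by linarith) hd) hd0
    _ ≤ d * (n * ((A * L + 16) * (1 - 1 / L) ^ 2)) := by
        gcongr
        exact mul_add_one_le_mul_one_sub_inv_sq hA0 hA2 hL
    _ = (1 - 1 / L) * (d * (n * (1 - 1 / L))) * (A * L + 16) := by ring
    _ ≤ (1 - 1 / L) * (d * (n - m)) * (A * L + 16) := by gcongr

lemma exp_div_three_le_gaussianPDFReal_tailLevel {κ ε L : ℝ} (hL : 8 ≤ L) (hκε : κ * ε ≤ 2)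
    (hκεL : 10 * √L ≤ κ * ε * L) :
    Real.exp (3 * √L - 9 - L) / 3 ≤ gaussianPDFReal 0 1 (tailLevel κ ε L + 1) := by
  set t := tailLevel κ ε L
  have hsq : √L ^ 2 = L := Real.sq_sqrt (by linarith)
  have hs : 0 ≤ √L := Real.sqrt_nonneg L
  have ht2 : t ^ 2 = (2 - κ * ε) * L + 16 :=
    Real.sq_sqrt (add_nonneg (mul_nonneg (by linarith) (by linarith)) (by norm_num))
  have ht : t ≤ 2 * √L := by
    apply abs_le_of_sq_le_sq' _ (by positivity) |>.2
    nlinarith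
  have hpi : 1 / 3 ≤ (√(2 * Real.pi))⁻¹ := by
    rw [one_div]
    refine inv_anti₀ (by positivity) (Real.sqrt_le_iff.2 ⟨by norm_num, ?_⟩)
    linarith [Real.pi_lt_d2]
  have hexponent : 3 * √L - 9 - L ≤ -(t + 1) ^ 2 / 2 := by nlinarith
  calc Real.exp (3 * √L - 9 - L) / 3 = 1 / 3 * Real.exp (3 * √L - 9 - L) := by ring
    _ ≤ (√(2 * Real.pi))⁻¹ * Real.exp (-(t + 1) ^ 2 / 2) := by gcongr
    _ = gaussianPDFReal 0 1 (t + 1) := by simp [gaussianPDFReal]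

lemma sqrt_le_mul_gaussianPDFReal_tailLevel {κ ε L m : ℝ} (hL : 8 ≤ L) (hκε : κ * ε ≤ 2)
    (hκεL : 10 * √L ≤ κ * ε * L) (hm : Real.exp L / L - 1 ≤ m) :
    Real.exp (-9) / 6 * √L ≤ m * gaussianPDFReal 0 1 (tailLevel κ ε L + 1) := by
  have hL0 : 0 < L := by linarith
  have : 0 < √L := Real.sqrt_pos.2 hL0
  have hm' : Real.exp L / (2 * L) ≤ m := by
    have hquad := Real.quadratic_le_exp_of_nonneg hL0.le
    have hone : 1 ≤ Real.exp L / (2 * L) := by rw [le_div_iff₀ (by positivity)]; nlinarith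
    have hdouble : Real.exp L / L = 2 * (Real.exp L / (2 * L)) := by field_simp
    linarith
  have hcube : √L ^ 3 ≤ Real.exp (3 * √L) := by
    calc √L ^ 3 ≤ Real.exp √L ^ 3 := by
          gcongr; linarith [Real.add_one_le_exp √L]
      _ = Real.exp (3 * √L) := by rw [← Real.exp_nat_mul]; norm_num
  calc Real.exp (-9) / 6 * √L = √L ^ 3 * Real.exp (-9) / (6 * L) := by
        rw [eq_div_iff (by positivity)]
        linear_combination (-Real.exp (-9) * √L) * Real.sq_sqrt hL0.le
    _ ≤ Real.exp (3 * √L) * Real.exp (-9) / (6 * L) := by gcongr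
    _ = Real.exp L / (2 * L) * (Real.exp (3 * √L - 9 - L) / 3) := by
        rw [← Real.exp_add, show 3 * √L + -9 = L + (3 * √L - 9 - L) by ring, Real.exp_add]
        field_simp
        norm_num
    _ ≤ m * gaussianPDFReal 0 1 (tailLevel κ ε L + 1) :=
        mul_le_mul hm' (exp_div_three_le_gaussianPDFReal_tailLevel hL hκε hκεL) (by positivity)
          ((by positivity : 0 ≤ Real.exp L / (2 * L)).trans hm')

/-- The labels `y_{∖[m]}` padded with zeros to a vector indexed by all samples, so that
`y_{∖[m]}ᵀ X_{∖[m]}` becomes `maskedLabels m y ᵥ* X`. -/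
def maskedLabels {n : ℕ} (m : ℕ) (y : Fin n → ℝ) : Fin n → ℝ :=
  fun j => if m ≤ (j : ℕ) then y j else 0

lemma maskedLabels_of_lt {n m : ℕ} (y : Fin n → ℝ) {j : Fin n} (hj : (j : ℕ) < m) :
    maskedLabels m y j = 0 :=
  if_neg (not_le.2 hj)

lemma maskedLabels_dotProduct {n : ℕ} (m : ℕ) (y v : Fin n → ℝ) :
    maskedLabels m y ⬝ᵥ v = ∑ j ∈ Finset.univ.filter (fun j : Fin n => m ≤ (j : ℕ)), y j * v j := by
  simp only [maskedLabels, dotProduct, ite_mul, zero_mul, Finset.sum_filter]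

lemma maskedLabels_dotProduct_self {n m : ℕ} {y : Fin n → ℝ} (hy : ∀ i, |y i| = 1) (hmn : m ≤ n) :
    maskedLabels m y ⬝ᵥ maskedLabels m y = n - m := by
  have hone (j : Fin n) (hj : j ∈ Finset.univ.filter (fun j : Fin n => m ≤ (j : ℕ))) :
      y j * maskedLabels m y j = 1 := by
    rw [maskedLabels, if_pos (by simpa using hj), ← abs_mul_abs_self, hy j, one_mul]
  have hcard : (Finset.univ.filter (fun j : Fin n => m ≤ (j : ℕ))).card = n - m := by
    simp only [← not_lt, ← Finset.compl_filter, Finset.card_compl, Fin.card_filter_val_lt,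
      Fintype.card_fin, min_eq_right hmn]
  rw [maskedLabels_dotProduct, Finset.sum_congr rfl hone, Finset.sum_const, nsmul_one, hcard,
    Nat.cast_sub hmn]

lemma maskedLabels_vecMul_dotProduct {n d : ℕ} (m : ℕ) (y : Fin n → ℝ)
    (A : Matrix (Fin n) (Fin d) ℝ) (x : Fin d → ℝ) :
    (maskedLabels m y ᵥ* A) ⬝ᵥ x =
      ∑ j ∈ Finset.univ.filter (fun j : Fin n => m ≤ (j : ℕ)), y j * (A j ⬝ᵥ x) := by
  rw [← dotProduct_mulVec, maskedLabels_dotProduct]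
  rfl

/-- Upper bound for the failure probability at sample size `n`: the first term is the probability
that the norm is too small, the second that all `⌊n / log n⌋` scores stay below the threshold. -/
def failureBound (c₁ : ℝ) (n : ℕ) : ℝ≥0∞ :=
  ENNReal.ofReal (2 / c₁ * (Real.log n / n)) +
    ENNReal.ofReal (Real.exp (-(Real.exp (-9) / 6 * √(Real.log n))))

lemma tendsto_log_natCast_atTop : Tendsto (fun n : ℕ => Real.log n) atTop atTop :=
  Real.tendsto_log_atTop.comp tendsto_natCast_atTop_atTop

lemma tendsto_failureBound (c₁ : ℝ) : Tendsto (failureBound c₁) atTop (nhds 0) := by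
  have hratio : Tendsto (fun n : ℕ => Real.log n / n) atTop (nhds 0) :=
    Real.isLittleO_log_id_atTop.tendsto_div_nhds_zero.comp tendsto_natCast_atTop_atTop
  have hexp : Tendsto (fun n : ℕ => Real.exp (-(Real.exp (-9) / 6 * √(Real.log n)))) atTop
      (nhds 0) :=
    Real.tendsto_exp_neg_atTop_nhds_zero.comp <|
      (Real.tendsto_sqrt_atTop.comp tendsto_log_natCast_atTop).const_mul_atTop (by positivity)
  have h := (ENNReal.tendsto_ofReal (hratio.const_mul (2 / c₁))).add
    (ENNReal.tendsto_ofReal hexp)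
  rwa [mul_zero, ENNReal.ofReal_zero, add_zero] at h

namespace IsGaussSample

variable {Ω : Type*} [MeasurableSpace Ω] {μ : Measure Ω} {n d m : ℕ}
  {X : Ω → Matrix (Fin n) (Fin d) ℝ} {y : Fin n → ℝ} {C₀ c₁ ε : ℝ}

lemma one_sub_failureBound_le_measure_of_le (hX : IsGaussSample μ X) (hy : ∀ i, |y i| = 1)
    (hC : 4 ≤ C₀) (hc : 0 < c₁) (hε : 0 ≤ ε) (hε2 : ε ≤ 2) (hL : 8 ≤ Real.log n)
    (hεL : 10 * √(Real.log n) ≤ (1 - 4 / C₀) * ε * Real.log n) (hd_ge : c₁ * n * Real.log n ≤ d)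
    (hd_le : d ≤ (2 - ε) * n * Real.log n + 1) (hm_ge : n / Real.log n - 1 ≤ m)
    (hm_le : m ≤ n / Real.log n) :
    1 - failureBound c₁ n ≤ μ {ω | ∃ i : Fin n, (i : ℕ) < m ∧ 1 + ε / C₀ ≤ (d : ℝ)⁻¹ *
      (y i * ∑ j ∈ Finset.univ.filter (fun j : Fin n => m ≤ (j : ℕ)),
        y j * (X ω j ⬝ᵥ X ω i))} := by
  set L := Real.log n
  have hn0 : (0 : ℝ) < n := Nat.cast_pos.2 <| n.pos_of_ne_zero <| by
    rintro rfl
    norm_num [L] at hL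
  have hexp : Real.exp L = n := Real.exp_log hn0
  have hn4 : (4 : ℝ) ≤ n := by linarith [Real.add_one_le_exp L]
  have hd0 : (0 : ℝ) < d := lt_of_lt_of_le (by positivity) hd_ge
  have hmn : m ≤ n := by exact_mod_cast hm_le.trans (div_le_self hn0.le (by linarith))
  have hκε : (1 - 4 / C₀) * ε ≤ 2 := by
    have : 0 ≤ 4 / C₀ * ε := by positivity
    linarith
  have hthreshold : d * (1 + ε / C₀) ≤
      √((1 - 1 / L) * (d * (maskedLabels m y ⬝ᵥ maskedLabels m y))) *
        tailLevel (1 - 4 / C₀) ε L := by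
    rw [maskedLabels_dotProduct_self hy hmn]
    exact mul_one_add_div_le_sqrt_mul_tailLevel hC hε hε2 hn4 (by linarith) hd0.le hd_le hm_le
  have hmain := hX.one_sub_le_measure_exists_le (a := y)
    (S := Finset.univ.filter fun i : Fin n => (i : ℕ) < m)
    (fun i hi => maskedLabels_of_lt y (by simpa using hi)) (fun i _ => hy i) (by positivity)
    (Real.sqrt_nonneg _) hthreshold
  have hnorm : 2 / (d * (1 / L) ^ 2) ≤ 2 / c₁ * (L / n) := by
    calc 2 / (d * (1 / L) ^ 2) ≤ 2 / (c₁ * n * L * (1 / L) ^ 2) := by gcongr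
      _ = 2 / c₁ * (L / n) := by field_simp
  have htail := sqrt_le_mul_gaussianPDFReal_tailLevel (m := m) hL hκε hεL (by rwa [hexp])
  simp only [maskedLabels_vecMul_dotProduct, Finset.mem_filter, Finset.mem_univ, true_and,
    Fin.card_filter_val_lt, min_eq_right hmn] at hmain
  simp only [le_inv_mul_iff₀ hd0]
  refine le_trans (tsub_le_tsub_left (add_le_add ?_ ?_) 1) hmain
  · exact ENNReal.ofReal_le_ofReal hnorm
  · exact ENNReal.ofReal_le_ofReal (Real.exp_le_exp.2 (neg_le_neg htail))

lemma one_sub_failureBound_le_measure (hX : IsGaussSample μ X) (hy : ∀ i, |y i| = 1) (hC : 4 < C₀)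
    (hc : 0 < c₁) (hε : 0 ≤ ε) (hεc : ε ≤ 2 - c₁) (hL : 8 ≤ Real.log n)
    (hεL : 10 / (1 - 4 / C₀) / √(Real.log n) ≤ ε) (hd : d = ⌈(2 - ε) * n * Real.log n⌉₊)
    (hm : m = ⌊n / Real.log n⌋₊) :
    1 - failureBound c₁ n ≤ μ {ω | ∃ i : Fin n, (i : ℕ) < m ∧ 1 + ε / C₀ ≤ (d : ℝ)⁻¹ *
      (y i * ∑ j ∈ Finset.univ.filter (fun j : Fin n => m ≤ (j : ℕ)),
        y j * (X ω j ⬝ᵥ X ω i))} := by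
  have hL0 : 0 < Real.log n := by linarith
  have hκ : 0 < 1 - 4 / C₀ := sub_pos.2 ((div_lt_one (by linarith)).2 hC)
  have hε2 : 0 ≤ 2 - ε := by linarith
  refine hX.one_sub_failureBound_le_measure_of_le hy hC.le hc hε (by linarith) hL ?_ ?_
    (hd ▸ (Nat.ceil_lt_add_one (by positivity)).le) (hm ▸ (Nat.sub_one_lt_floor _).le)
    (hm ▸ Nat.floor_le (by positivity))
  · rw [div_div, div_le_iff₀ (by positivity)] at hεL
    calc 10 * √(Real.log n) ≤ ε * ((1 - 4 / C₀) * √(Real.log n)) * √(Real.log n) := by gcongr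
      _ = (1 - 4 / C₀) * ε * Real.log n := by
          linear_combination (1 - 4 / C₀) * ε * Real.sq_sqrt hL0.le
  · calc c₁ * n * Real.log n ≤ (2 - ε) * n * Real.log n := by gcongr; linarith
      _ ≤ d := hd ▸ Nat.le_ceil _

end IsGaussSample

/-- Lemma 6 (asymptotic-lb2): below the threshold `d = ⌈(2−εₙ) n ln n⌉`, the probability that
`max_{i ∈ [m]} d⁻¹ yᵢ y_{∖[m]}ᵀ X_{∖[m]} xᵢ ≥ 1 + εₙ/C₀` tends to `1`, where
`m = ⌊n / ln n⌋` and `y_{∖[m]}ᵀ X_{∖[m]} xᵢ = ∑_{j ≥ m} yⱼ ⟨xⱼ, xᵢ⟩`. -/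
theorem stmt15 :
    ∀ C₀ : ℝ, 4 < C₀ → ∀ c₁ : ℝ, 0 < c₁ → c₁ < 2 →
    ∃ C₂ > (0 : ℝ),
      ∀ ε : ℕ → ℝ, (∀ n, 0 < ε n) →
        (∀ᶠ n : ℕ in atTop, C₂ / Real.sqrt (Real.log n) ≤ ε n ∧ ε n ≤ 2 - c₁) →
        ∀ (Ω : ℕ → Type*) [∀ n, MeasurableSpace (Ω n)] (μ : ∀ n, Measure (Ω n)),
          (∀ n, IsProbabilityMeasure (μ n)) →
        ∀ (X : ∀ n : ℕ, Ω n → Matrix (Fin n) (Fin ⌈(2 - ε n) * n * Real.log n⌉₊) ℝ)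
          (y : ∀ n : ℕ, Fin n → ℝ),
          (∀ n i, y n i = 1 ∨ y n i = -1) →
          (∀ n, IsGaussSample (μ n) (X n)) →
          Tendsto
            (fun n => μ n {ω | ∃ i : Fin n, (i : ℕ) < ⌊(n : ℝ) / Real.log n⌋₊ ∧
                1 + ε n / C₀ ≤ ((⌈(2 - ε n) * n * Real.log n⌉₊ : ℝ))⁻¹ *
                  (y n i * ∑ j ∈ Finset.univ.filter
                      (fun j : Fin n => ⌊(n : ℝ) / Real.log n⌋₊ ≤ (j : ℕ)),
                    y n j * (X n ω j ⬝ᵥ X n ω i))})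
            atTop (nhds 1) := by
  intro C₀ hC c₁ hc _
  have hκ : 0 < 1 - 4 / C₀ := sub_pos.2 ((div_lt_one (by linarith)).2 hC)
  refine ⟨10 / (1 - 4 / C₀), by positivity, fun ε hε hεbound Ω _ μ hμ X y hy hX => ?_⟩
  have hlower : Tendsto (fun n => 1 - failureBound c₁ n) atTop (nhds 1) := by
    simpa using ENNReal.Tendsto.sub tendsto_const_nhds (tendsto_failureBound c₁)
      (Or.inl ENNReal.one_ne_top)
  refine tendsto_of_tendsto_of_tendsto_of_le_of_le' hlower tendsto_const_nhds ?_
    (Eventually.of_forall fun n => prob_le_one)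
  filter_upwards [hεbound, tendsto_log_natCast_atTop.eventually_ge_atTop 8] with n hn hL
  exact (hX n).one_sub_failureBound_le_measure (fun i => by rcases hy n i with h | h <;> simp [h])
    hC hc (hε n).le hn.2 hL hn.1 rfl rfl

end
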